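/- Let X be a Banach space without subspaces isomorphic to ℓ₁ and let (x_{n,m}) be a bounded double sequence in X. Suppose x** ∈ X** is a weak* limit point of every column (x_{n,m})_n. Then there exist strictly increasing index sequences (n(k)) and (m(k)) such that x_{n(k),m(k)} → x** in the weak* topology of X**. -/

import Mathlib

/-!
Functions `g i` on a compact space that converge pointwise to `f` along an ultrafilter `U` on a
countable index set still converge to `f` along some coarser filter that is countably generated,
unless they contain an independent sequence in the sense of Rosenthal. It suffices to force
`r < g i x` at all points with `s < f x`, for rational `r < s`. If this can be forced, for `U`-many
`i`, on the part of a set `C` where `s ≤ g i`, or for `U`-many `i` on the part where `g i ≤ r`, then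
it can be forced on `C`. Hence if it cannot be forced on the whole space, then for `U`-many `i` both
alternatives fail simultaneously; iterating this gives a tree of sets whose branches are nonempty by
compactness, that is, an independent sequence.

Applied to the evaluations at the points `x n m` on the weak* compact dual ball, an independent
sequence would span a copy of `ℓ₁`. So `x n m → x''` along a countably generated filter, which can
be taken finer than `atTop` on `ℕ × ℕ` and therefore contains the required sequence of indices.
-/

open Filter Topology

section Independence

/-- Rosenthal's notion of an independent sequence of functions for the levels `r < s`: every
pattern of alternatives `s ≤ h n`, `h n ≤ r` is realised at some point. The pattern is encoded by
the set `p` of those `n` for which the first alternative is chosen. -/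
def IndependentAt {K : Type*} (r s : ℝ) (h : ℕ → K → ℝ) : Prop :=
  ∀ p : Set ℕ, ∃ x, (∀ n ∈ p, s ≤ h n x) ∧ ∀ n ∉ p, h n x ≤ r

theorem IndependentAt.neg {K : Type*} {r s : ℝ} {h : ℕ → K → ℝ} (hh : IndependentAt r s h) :
    IndependentAt (-s) (-r) fun n x => -h n x := fun p =>
  let ⟨x, hs, hr⟩ := hh pᶜ
  ⟨x, fun n hn => neg_le_neg (hr n (not_not.2 hn)), fun n hn => neg_le_neg (hs n hn)⟩

variable {ι κ K : Type*} {l : Filter ι} {S : κ → ι → Set K} {Q : Set K → Prop}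

theorem exists_seq_forall_biInter_lt [l.NeBot] [Finite κ] (huniv : Q Set.univ)
    (hQ : ∀ C, Q C → ∀ᶠ i in l, ∀ c, Q (C ∩ S c i)) :
    ∃ a : ℕ → ι, ∀ (ε : ℕ → κ) (k : ℕ), Q (⋂ j < k, S (ε j) (a j)) := by
  have hpick (𝒞 : {𝒞 : Set (Set K) // 𝒞.Finite ∧ ∀ C ∈ 𝒞, Q C}) :
      ∃ i, ∀ C ∈ 𝒞.1, ∀ c, Q (C ∩ S c i) :=
    ((eventually_all_finite 𝒞.2.1).2 fun C hC => hQ C (𝒞.2.2 C hC)).exists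
  choose pick hpick using hpick
  let refinement (𝒞 : {𝒞 : Set (Set K) // 𝒞.Finite ∧ ∀ C ∈ 𝒞, Q C}) :
      {𝒞 : Set (Set K) // 𝒞.Finite ∧ ∀ C ∈ 𝒞, Q C} :=
    ⟨Set.image2 (fun C c => C ∩ S c (pick 𝒞)) 𝒞 Set.univ, 𝒞.2.1.image2 _ Set.finite_univ,
      Set.forall_mem_image2.2 fun C hC c _ => hpick 𝒞 C hC c⟩
  let level (k : ℕ) := refinement^[k] ⟨{Set.univ}, Set.finite_singleton _, by simpa using huniv⟩
  refine ⟨fun k => pick (level k), fun ε k => (level k).2.2 _ ?_⟩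
  induction k with
  | zero => simp [level]
  | succ k ih =>
    rw [Set.biInter_lt_succ, show level (k + 1) = refinement (level k) from
      Function.iterate_succ_apply' ..]
    exact Set.mem_image2_of_mem ih (Set.mem_univ _)

theorem exists_seq_forall_iInter_nonempty [TopologicalSpace K] [CompactSpace K] [l.NeBot]
    [Finite κ] (hS : ∀ c i, IsClosed (S c i)) (huniv : Q Set.univ)
    (hne : ∀ C, Q C → C.Nonempty) (hQ : ∀ C, Q C → ∀ᶠ i in l, ∀ c, Q (C ∩ S c i)) :
    ∃ a : ℕ → ι, ∀ ε : ℕ → κ, (⋂ k, S (ε k) (a k)).Nonempty := by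
  obtain ⟨a, ha⟩ := exists_seq_forall_biInter_lt huniv hQ
  refine ⟨a, fun ε => CompactSpace.iInter_nonempty (fun k => hS _ _) fun t => ?_⟩
  obtain ⟨n, hn⟩ := t.exists_nat_subset_range
  exact (hne _ (ha ε n)).mono
    (Set.biInter_subset_biInter_left fun j hj => Finset.mem_range.1 (hn hj))

end Independence

section CountablyGenerated

variable {ι K : Type*} {g : ι → K → ℝ} {f : K → ℝ} {r s : ℝ} {C : Set K}

/-- Some countably generated filter coarser than `U` forces `r < g i x` eventually in `i`, at every
point `x` of `C` with `s < f x`. It serves to replace convergence of `g` to `f` along `U` by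
convergence along a filter from which a sequence can be extracted. -/
def EventuallyAboveOn (U : Filter ι) (g : ι → K → ℝ) (f : K → ℝ) (r s : ℝ) (C : Set K) :
    Prop :=
  ∃ l : Filter ι, l.IsCountablyGenerated ∧ U ≤ l ∧ ∀ x ∈ C, s < f x → ∀ᶠ i in l, r < g i x

theorem eventuallyAboveOn_empty {U : Filter ι} : EventuallyAboveOn U g f r s ∅ :=
  ⟨⊤, inferInstance, le_top, by simp⟩

theorem EventuallyAboveOn.of_eventually_superlevel [Countable ι] {U : Filter ι} [U.NeBot]
    (hf : ∀ x, Tendsto (fun i => g i x) U (𝓝 (f x)))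
    (h : ∀ᶠ i in U, EventuallyAboveOn U g f r s (C ∩ {x | s ≤ g i x})) :
    EventuallyAboveOn U g f r s C := by
  choose l hl hUl hgl using fun i : {i | EventuallyAboveOn U g f r s (C ∩ {x | s ≤ g i x})} => i.2
  refine ⟨⨅ i, l i, inferInstance, le_iInf hUl, fun x hx hsx => ?_⟩
  obtain ⟨i, hi, hsi⟩ := (h.and ((hf x).eventually_const_lt hsx)).exists
  exact iInf_le l ⟨i, hi⟩ (hgl ⟨i, hi⟩ x ⟨hx, hsi.le⟩ hsx)

theorem EventuallyAboveOn.of_eventually_sublevel [Countable ι] {U : Filter ι}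
    (h : ∀ᶠ i in U, EventuallyAboveOn U g f r s (C ∩ {x | g i x ≤ r})) :
    EventuallyAboveOn U g f r s C := by
  set B := {i | EventuallyAboveOn U g f r s (C ∩ {x | g i x ≤ r})}
  choose l hl hUl hgl using fun i : B => i.2
  refine ⟨𝓟 B ⊓ ⨅ i, l i, inferInstance, le_inf (le_principal_iff.2 h) (le_iInf hUl),
    fun x hx hsx => ?_⟩
  by_contra hfreq
  simp only [not_eventually, not_lt] at hfreq
  have hB : ∀ᶠ i in 𝓟 B ⊓ ⨅ i, l i, i ∈ B := mem_inf_of_left (mem_principal_self B)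
  obtain ⟨i, hri, hi⟩ := (hfreq.and_eventually hB).exists
  have hgt : ∀ᶠ j in 𝓟 B ⊓ ⨅ i, l i, r < g j x :=
    inf_le_of_right_le (iInf_le l ⟨i, hi⟩) (hgl ⟨i, hi⟩ x ⟨hx, hri⟩ hsx)
  exact hfreq (hgt.mono fun _ => not_le.2)

variable {U : Ultrafilter ι}

theorem eventuallyAboveOn_univ [Countable ι] [TopologicalSpace K] [CompactSpace K]
    (hg : ∀ i, Continuous (g i)) (hind : ∀ a : ℕ → ι, ¬ IndependentAt r s fun k => g (a k))
    (hf : ∀ x, Tendsto (fun i => g i x) U (𝓝 (f x))) :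
    EventuallyAboveOn U g f r s Set.univ := by
  classical
  by_contra huniv
  let S (c : Bool) (i : ι) : Set K := if c then {x | s ≤ g i x} else {x | g i x ≤ r}
  have hclosed (c : Bool) (i : ι) : IsClosed (S c i) := by
    cases c
    · exact isClosed_le (hg i) continuous_const
    · exact isClosed_le continuous_const (hg i)
  have hnonempty (C : Set K) (hC : ¬ EventuallyAboveOn U g f r s C) : C.Nonempty :=
    Set.nonempty_iff_ne_empty.2 fun h => hC (h ▸ eventuallyAboveOn_empty)
  have hsplit (C : Set K) (hC : ¬ EventuallyAboveOn U g f r s C) :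
      ∀ᶠ i in (U : Filter ι), ∀ c, ¬ EventuallyAboveOn U g f r s (C ∩ S c i) := by
    refine eventually_all.2 fun c => Ultrafilter.eventually_not.2 fun h => hC ?_
    cases c
    · exact .of_eventually_sublevel h
    · exact .of_eventually_superlevel hf h
  obtain ⟨a, ha⟩ := exists_seq_forall_iInter_nonempty hclosed huniv hnonempty hsplit
  refine hind a fun p => ?_
  obtain ⟨x, hx⟩ := ha fun k => decide (k ∈ p)
  rw [Set.mem_iInter] at hx
  exact ⟨x, fun n hn => by simpa [S, hn] using hx n, fun n hn => by simpa [S, hn] using hx n⟩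

theorem exists_isCountablyGenerated_eventually_lt [Countable ι] [TopologicalSpace K]
    [CompactSpace K] (hg : ∀ i, Continuous (g i))
    (hind : ∀ r s, r < s → ∀ a : ℕ → ι, ¬ IndependentAt r s fun k => g (a k))
    (hf : ∀ x, Tendsto (fun i => g i x) U (𝓝 (f x))) :
    ∃ l : Filter ι, l.IsCountablyGenerated ∧ ↑U ≤ l ∧ ∀ x, ∀ b < f x, ∀ᶠ i in l, b < g i x := by
  choose l hl hUl hgl using fun q : {q : ℚ × ℚ // q.1 < q.2} =>
    eventuallyAboveOn_univ hg (hind q.1.1 q.1.2 (Rat.cast_lt.2 q.2)) hf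
  refine ⟨⨅ q, l q, inferInstance, le_iInf hUl, fun x b hb => ?_⟩
  obtain ⟨s, hbs, hsf⟩ := exists_rat_btwn hb
  obtain ⟨r, hbr, hrs⟩ := exists_rat_btwn hbs
  let q : {q : ℚ × ℚ // q.1 < q.2} := ⟨(r, s), Rat.cast_lt.1 hrs⟩
  have hgt : ∀ᶠ i in l q, (r : ℝ) < g i x := hgl q x (Set.mem_univ x) hsf
  exact iInf_le l q (hgt.mono fun _ => hbr.trans)

theorem exists_isCountablyGenerated_tendsto [Countable ι] [TopologicalSpace K] [CompactSpace K]
    (hg : ∀ i, Continuous (g i))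
    (hind : ∀ r s, r < s → ∀ a : ℕ → ι, ¬ IndependentAt r s fun k => g (a k))
    (hf : ∀ x, Tendsto (fun i => g i x) U (𝓝 (f x))) :
    ∃ l : Filter ι, l.IsCountablyGenerated ∧ ↑U ≤ l ∧
      ∀ x, Tendsto (fun i => g i x) l (𝓝 (f x)) := by
  obtain ⟨l₁, hl₁, hUl₁, hlower⟩ := exists_isCountablyGenerated_eventually_lt hg hind hf
  have hind_neg (r s : ℝ) (hrs : r < s) (a : ℕ → ι) :
      ¬ IndependentAt r s fun k x => -g (a k) x := fun h =>
    hind (-s) (-r) (neg_lt_neg hrs) a (by simpa only [neg_neg] using h.neg)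
  obtain ⟨l₂, hl₂, hUl₂, hupper⟩ := exists_isCountablyGenerated_eventually_lt
    (fun i => (hg i).neg) hind_neg fun x => (hf x).neg
  refine ⟨l₁ ⊓ l₂, inferInstance, le_inf hUl₁ hUl₂, fun x => tendsto_order.2 ⟨fun b hb => ?_,
    fun b hb => ?_⟩⟩
  · exact (hlower x b hb).filter_mono inf_le_left
  · exact ((hupper x (-b) (neg_lt_neg hb)).filter_mono inf_le_right).mono fun _ => neg_lt_neg_iff.1

end CountablyGenerated

section LOne

theorem hasSum_norm_lp_one {α : Type*} {E : α → Type*} [∀ i, NormedAddCommGroup (E i)]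
    (v : lp E 1) : HasSum (fun i => ‖v i‖) ‖v‖ := by
  simpa using lp.hasSum_norm (p := 1) (by simp) v

section Combination

variable {α 𝕜 X : Type*} [NormedField 𝕜] [NormedAddCommGroup X] [NormedSpace 𝕜 X]
  {y : α → X} {C : ℝ}

theorem norm_lp_one_smul_le (hy : ∀ i, ‖y i‖ ≤ C) (v : lp (fun _ : α => 𝕜) 1) (i : α) :
    ‖v i • y i‖ ≤ ‖v i‖ * C :=
  (norm_smul_le _ _).trans (mul_le_mul_of_nonneg_left (hy i) (norm_nonneg _))

variable [CompleteSpace X]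

theorem summable_lp_one_smul (hy : ∀ i, ‖y i‖ ≤ C) (v : lp (fun _ : α => 𝕜) 1) :
    Summable fun i => v i • y i :=
  .of_norm_bounded ((hasSum_norm_lp_one v).summable.mul_right C) (norm_lp_one_smul_le hy v)

/-- The operator `v ↦ ∑ i, v i • y i` from `ℓ₁` to a Banach space defined by a bounded family `y`.
It is the candidate for an embedding of `ℓ₁`. -/
noncomputable def lpOneCombination (y : α → X) (hy : ∀ i, ‖y i‖ ≤ C) :
    lp (fun _ : α => 𝕜) 1 →L[𝕜] X :=
  LinearMap.mkContinuous
    { toFun := fun v => ∑' i, v i • y i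
      map_add' := fun v w => by
        simp only [lp.coeFn_add, Pi.add_apply, add_smul,
          (summable_lp_one_smul hy v).tsum_add (summable_lp_one_smul hy w)]
      map_smul' := fun c v => by
        simp only [lp.coeFn_smul, Pi.smul_apply, smul_assoc, RingHom.id_apply,
          (summable_lp_one_smul hy v).tsum_const_smul c] }
    C fun v => tsum_of_norm_bounded (mul_comm C ‖v‖ ▸ (hasSum_norm_lp_one v).mul_right C)
      (norm_lp_one_smul_le hy v)

theorem hasSum_lpOneCombination (hy : ∀ i, ‖y i‖ ≤ C) (v : lp (fun _ : α => 𝕜) 1) :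
    HasSum (fun i => v i • y i) (lpOneCombination y hy v) :=
  (summable_lp_one_smul hy v).hasSum

end Combination

variable {X : Type*} [NormedAddCommGroup X] [NormedSpace ℝ X]

/-- `X` contains an isomorphic copy of `ℓ₁`: some operator from `ℓ₁` to `X` is bounded below. -/
def ContainsLOne (X : Type*) [NormedAddCommGroup X] [NormedSpace ℝ X] : Prop :=
  ∃ (f : lp (fun _ : ℕ => ℝ) 1 →L[ℝ] X) (c : ℝ), 0 < c ∧ ∀ v, c * ‖v‖ ≤ ‖f v‖

/-- The closed unit ball of the dual, with the weak* topology: the compact space on which elements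
of `X` are regarded as continuous functions. -/
def weakDualBall (X : Type*) [NormedAddCommGroup X] [NormedSpace ℝ X] : Set (WeakDual ℝ X) :=
  WeakDual.toStrongDual ⁻¹' Metric.closedBall 0 1

instance : CompactSpace (weakDualBall X) :=
  isCompact_iff_compactSpace.1 (WeakDual.isCompact_closedBall 0 1)

theorem apply_le_norm_of_mem_weakDualBall {φ : WeakDual ℝ X} (hφ : φ ∈ weakDualBall X) (z : X) :
    |φ z| ≤ ‖z‖ :=
  ((WeakDual.toStrongDual φ).le_of_opNorm_le (mem_closedBall_zero_iff.1 hφ) z).trans_eq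
    (one_mul _)

variable {r s : ℝ}

theorem IndependentAt.norm_le_norm_lpOneCombination [CompleteSpace X] {y : ℕ → X} {C : ℝ}
    (hy : ∀ n, ‖y n‖ ≤ C)
    (hind : IndependentAt r s fun n (φ : weakDualBall X) => φ.1 (y n)) (v : lp (fun _ : ℕ => ℝ) 1) :
    (s - r) / 2 * ‖v‖ ≤ ‖lpOneCombination y hy v‖ := by
  -- `φ` and `ψ` realise opposite patterns, so `φ - ψ` detects the signs of all coordinates of `v`.
  obtain ⟨φ, hφs, hφr⟩ := hind {n | 0 ≤ v n}
  obtain ⟨ψ, hψs, hψr⟩ := hind {n | 0 ≤ v n}ᶜ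
  have hterm (n : ℕ) : ‖v n‖ * (s - r) ≤ v n * φ.1 (y n) - v n * ψ.1 (y n) := by
    rw [← mul_sub]
    rcases le_or_gt 0 (v n) with hv | hv
    · rw [Real.norm_of_nonneg hv]
      exact mul_le_mul_of_nonneg_left (sub_le_sub (hφs n hv) (hψr n (not_not.2 hv))) hv
    · rw [Real.norm_of_nonpos hv.le, neg_mul, ← mul_neg, neg_sub]
      exact mul_le_mul_of_nonpos_left (sub_le_sub (hφr n hv.not_ge) (hψs n hv.not_ge)) hv.le
  have hsum (χ : WeakDual ℝ X) :
      HasSum (fun n => v n * χ (y n)) (χ (lpOneCombination y hy v)) := by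
    simpa only [map_smul, smul_eq_mul, WeakDual.toStrongDual_apply] using
      (WeakDual.toStrongDual χ).hasSum (hasSum_lpOneCombination hy v)
  have hlower := hasSum_le hterm ((hasSum_norm_lp_one v).mul_right (s - r))
    ((hsum φ).sub (hsum ψ))
  have hφ := apply_le_norm_of_mem_weakDualBall φ.2 (lpOneCombination y hy v)
  have hψ := apply_le_norm_of_mem_weakDualBall ψ.2 (lpOneCombination y hy v)
  linarith [le_of_abs_le hφ, neg_le_of_abs_le hψ]

theorem IndependentAt.containsLOne [CompleteSpace X] {y : ℕ → X} {C : ℝ} (hy : ∀ n, ‖y n‖ ≤ C)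
    (hind : IndependentAt r s fun n (φ : weakDualBall X) => φ.1 (y n)) (hrs : r < s) :
    ContainsLOne X :=
  ⟨lpOneCombination y hy, (s - r) / 2, half_pos (sub_pos.2 hrs),
    hind.norm_le_norm_lpOneCombination hy⟩

theorem exists_eq_smul_mem_weakDualBall (f : X →L[ℝ] ℝ) :
    ∃ (c : ℝ) (φ : weakDualBall X), f = c • WeakDual.toStrongDual φ.1 := by
  have hpos : 0 < ‖f‖ + 1 := by positivity
  have hnorm : ‖(‖f‖ + 1)⁻¹ • f‖ ≤ 1 := by
    rw [norm_smul, norm_inv, Real.norm_of_nonneg hpos.le, inv_mul_le_one₀ hpos]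
    exact le_add_of_nonneg_right zero_le_one
  exact ⟨‖f‖ + 1, ⟨StrongDual.toWeakDual ((‖f‖ + 1)⁻¹ • f), mem_closedBall_zero_iff.2 hnorm⟩,
    (smul_inv_smul₀ hpos.ne' f).symm⟩

theorem exists_isCountablyGenerated_tendsto_apply [CompleteSpace X] {ι : Type*} [Countable ι]
    {U : Ultrafilter ι} (hX : ¬ ContainsLOne X) {y : ι → X} {C : ℝ} (hy : ∀ i, ‖y i‖ ≤ C)
    {z : (X →L[ℝ] ℝ) → ℝ} (hz : ∀ f, Tendsto (fun i => f (y i)) U (𝓝 (z f))) :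
    ∃ l : Filter ι, l.IsCountablyGenerated ∧ ↑U ≤ l ∧
      ∀ f : X →L[ℝ] ℝ, Tendsto (fun i => f (y i)) l (𝓝 (z f)) := by
  obtain ⟨l, hl, hUl, hlim⟩ := exists_isCountablyGenerated_tendsto
    (g := fun i (φ : weakDualBall X) => φ.1 (y i))
    (fun i => (WeakDual.eval_continuous (y i)).comp continuous_subtype_val)
    (fun r s hrs a hind => hX (hind.containsLOne (fun k => hy (a k)) hrs))
    (fun φ => hz (WeakDual.toStrongDual φ.1))
  refine ⟨l, hl, hUl, fun f => ?_⟩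
  obtain ⟨c, φ, rfl⟩ := exists_eq_smul_mem_weakDualBall f
  have hzφ : z (c • WeakDual.toStrongDual φ.1) = c * z (WeakDual.toStrongDual φ.1) :=
    tendsto_nhds_unique (hz _) ((hz _).const_mul c)
  rw [hzφ]
  exact (hlim φ).const_mul c

end LOne

theorem mapClusterPt_pi_of_forall_finset {α β E : Type*} [PseudoMetricSpace E] {F : Filter β}
    {u : β → α → E} {z : α → E}
    (h : ∀ t : Finset α, ∀ ε > 0, ∃ᶠ b in F, ∀ a ∈ t, dist (u b a) (z a) < ε) :
    MapClusterPt z F u := by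
  refine mapClusterPt_iff_frequently.2 fun V hV => ?_
  rw [nhds_pi, mem_pi'] at hV
  obtain ⟨t, W, hW, hWV⟩ := hV
  have hsmall : ∀ᶠ ε in 𝓝[>] (0 : ℝ), ∀ a ∈ t, Metric.ball (z a) ε ⊆ W a := by
    refine (eventually_all_finset t).2 fun a _ => ?_
    obtain ⟨δ, hδ, hball⟩ := Metric.mem_nhds_iff.1 (hW a)
    filter_upwards [Ioo_mem_nhdsGT hδ] with ε hε
    exact (Metric.ball_subset_ball hε.2.le).trans hball
  obtain ⟨ε, hε, hpos⟩ := (hsmall.and self_mem_nhdsWithin).exists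
  exact (h t ε hpos).mono fun b hb => hWV fun a ha => hε a ha (hb a ha)

theorem exists_strictMono_fst_strictMono_snd {α β : Type*} [LinearOrder α] [NoMaxOrder α]
    [LinearOrder β] [NoMaxOrder β] {a : ℕ → α × β} (ha : Tendsto a atTop atTop) :
    ∃ φ : ℕ → ℕ, StrictMono φ ∧ StrictMono (fun k => (a (φ k)).1) ∧
      StrictMono fun k => (a (φ k)).2 := by
  rw [← prod_atTop_atTop_eq] at ha
  obtain ⟨φ, hφ, hfst⟩ := strictMono_subseq_of_tendsto_atTop ha.fst
  obtain ⟨ψ, hψ, hsnd⟩ :=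
    strictMono_subseq_of_tendsto_atTop (ha.snd.comp hφ.tendsto_atTop)
  exact ⟨φ ∘ ψ, hφ.comp hψ, hfst.comp hψ, hsnd⟩

/-- Let `X` be a Banach space containing no isomorphic copy of `ℓ₁`, `(x_{n,m})` a bounded
double sequence in `X`, and `x** ∈ X**` a weak* limit point of every column `(x_{n,m})ₙ`.
Then there are strictly increasing sequences `(n(k))`, `(m(k))` with
`x_{n(k),m(k)} → x**` in the weak* topology of `X**`. -/
theorem stmt_14 {X : Type*} [NormedAddCommGroup X] [NormedSpace ℝ X] [CompleteSpace X]
    (hl1 : ¬ ∃ (f : lp (fun _ : ℕ => ℝ) 1 →L[ℝ] X) (c : ℝ), 0 < c ∧ ∀ v, c * ‖v‖ ≤ ‖f v‖)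
    (x : ℕ → ℕ → X) (C : ℝ) (hbdd : ∀ n m, ‖x n m‖ ≤ C)
    (x'' : (X →L[ℝ] ℝ) →L[ℝ] ℝ)
    (hcluster : ∀ m : ℕ, ∀ F : Finset (X →L[ℝ] ℝ), ∀ ε > (0 : ℝ), ∀ N : ℕ,
      ∃ n ≥ N, ∀ f ∈ F, |x'' f - f (x n m)| < ε) :
    ∃ nk mk : ℕ → ℕ, StrictMono nk ∧ StrictMono mk ∧
      ∀ f : X →L[ℝ] ℝ,
        Filter.Tendsto (fun k => f (x (nk k) (mk k))) Filter.atTop (nhds (x'' f)) := by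
  have hmap : MapClusterPt (⇑x'') atTop (fun p : ℕ × ℕ => fun f : X →L[ℝ] ℝ => f (x p.1 p.2)) := by
    refine mapClusterPt_pi_of_forall_finset fun F ε hε => frequently_atTop.2 fun ⟨N, m⟩ => ?_
    obtain ⟨n, hn, h⟩ := hcluster m F ε hε N
    exact ⟨(n, m), ⟨hn, le_rfl⟩, fun f hf => (dist_comm _ _).trans_lt (h f hf)⟩
  obtain ⟨U, hU, hUx⟩ := mapClusterPt_iff_ultrafilter.1 hmap
  obtain ⟨l, hl, hUl, hlim⟩ := exists_isCountablyGenerated_tendsto_apply hl1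
    (y := fun p : ℕ × ℕ => x p.1 p.2) (fun p => hbdd p.1 p.2) (tendsto_pi_nhds.1 hUx)
  have : (l ⊓ atTop).NeBot := U.neBot.mono (le_inf hUl hU)
  obtain ⟨a, ha⟩ := exists_seq_tendsto (l ⊓ atTop)
  obtain ⟨hal, hatop⟩ := tendsto_inf.1 ha
  obtain ⟨φ, hφ, hfst, hsnd⟩ := exists_strictMono_fst_strictMono_snd hatop
  exact ⟨fun k => (a (φ k)).1, fun k => (a (φ k)).2, hfst, hsnd,
    fun f => (hlim f).comp (hal.comp hφ.tendsto_atTop)⟩
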